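/- Let m ∈ ℕ₀ be even and let 0 < x ≤ y. If k > 1 then (β^(m)(y)/β^(m)(x))^k ≤ β^(m)(k y)/β^(m)(k x), and if 0 < k ≤ 1 the reverse inequality (β^(m)(y)/β^(m)(x))^k ≥ β^(m)(k y)/β^(m)(k x) holds. -/

import Mathlib

/-!
On `(0, ∞)` the function `β` is `x ↦ M(-x)`, where `M` is the moment-generating function of the
identity under the measure `1 / (1 + e^{-t}) dt` on `(0, ∞)` (`nielsenBeta_eq_mgf`). Hence, for even
`m`, `β^(m)(x) = ∫ t ^ m e^{-x t} / (1 + e^{-t}) dt` is positive, and it is log-convex because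
`exp` is convex (`convexOn_log_iteratedDeriv_nielsenBeta`): this is Hölder's inequality, obtained by
integrating a normalized pointwise inequality.

A convex function has a larger secant slope on `[k x, k y]` than on `[x, y]` when `k ≥ 1`
(`ConvexOn.mul_sub_le_sub`), which is the logarithm of the first inequality. The second inequality
is the first one with `k⁻¹` in place of `k`, at the points `k x ≤ k y`.
-/

open Real MeasureTheory Set

/-- Nielsen's beta function: `β(x) = ∫₀^∞ e^{-x t} / (1 + e^{-t}) dt`. -/
noncomputable def nielsenBeta (x : ℝ) : ℝ :=
  ∫ t in Set.Ioi (0:ℝ), Real.exp (-x * t) / (1 + Real.exp (-t))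

/-- The measure `1 / (1 + e^{-t}) dt` on `(0, ∞)`, whose Laplace transform is `nielsenBeta`. -/
noncomputable def nielsenMeasure : Measure ℝ :=
  (volume.restrict (Ioi 0)).withDensity fun t => ENNReal.ofReal (1 / (1 + exp (-t)))

lemma nielsenMeasure_le : nielsenMeasure ≤ volume.restrict (Ioi 0) := by
  calc nielsenMeasure ≤ (volume.restrict (Ioi 0)).withDensity 1 := by
        refine withDensity_mono (Filter.Eventually.of_forall fun t => ?_)
        have := exp_pos (-t)
        simp only [Pi.one_apply, ENNReal.ofReal_le_one]
        rw [div_le_one (by positivity)]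
        linarith
    _ = _ := withDensity_one

lemma nielsenMeasure_ne_zero : nielsenMeasure ≠ 0 := by
  intro h
  rw [nielsenMeasure, withDensity_eq_zero_iff (by fun_prop)] at h
  have h2 : ∀ᵐ t ∂(volume.restrict (Ioi (0 : ℝ))), False := by
    filter_upwards [h] with t ht
    have := exp_pos (-t)
    have h3 : (0 : ℝ) < 1 / (1 + exp (-t)) := by positivity
    simp only [Pi.zero_apply, ENNReal.ofReal_eq_zero] at ht
    linarith
  rw [Filter.eventually_false_iff_eq_bot, ae_eq_bot, Measure.restrict_eq_zero] at h2
  simp at h2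

lemma nielsenBeta_eq_mgf (x : ℝ) :
    nielsenBeta x = ProbabilityTheory.mgf id nielsenMeasure (-x) := by
  rw [nielsenBeta, ProbabilityTheory.mgf, nielsenMeasure,
    integral_withDensity_eq_integral_toReal_smul (by fun_prop) (by simp)]
  refine integral_congr_ae (Filter.Eventually.of_forall fun t => ?_)
  have := exp_pos (-t)
  simp only [id, smul_eq_mul]
  rw [ENNReal.toReal_ofReal (by positivity)]
  ring

lemma neg_mem_interior_integrableExpSet {x : ℝ} (hx : 0 < x) :
    -x ∈ interior (ProbabilityTheory.integrableExpSet id nielsenMeasure) := by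
  have h : Iio 0 ⊆ ProbabilityTheory.integrableExpSet id nielsenMeasure := fun t ht => by
    refine Integrable.mono_measure ?_ nielsenMeasure_le
    exact integrableOn_exp_mul_Ioi ht 0
  exact interior_maximal h isOpen_Iio (by simpa using hx)

lemma iteratedDeriv_nielsenBeta {m : ℕ} (hm : Even m) {x : ℝ} (hx : 0 < x) :
    iteratedDeriv m nielsenBeta x = ∫ t, t ^ m * exp (-x * t) ∂nielsenMeasure := by
  rw [funext nielsenBeta_eq_mgf, iteratedDeriv_comp_neg, hm.neg_one_pow, one_smul,
    ProbabilityTheory.iteratedDeriv_mgf (neg_mem_interior_integrableExpSet hx)]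
  rfl

lemma integrable_pow_mul_exp (m : ℕ) {x : ℝ} (hx : 0 < x) :
    Integrable (fun t => t ^ m * exp (-x * t)) nielsenMeasure :=
  ProbabilityTheory.integrable_pow_mul_exp_of_mem_interior_integrableExpSet
    (neg_mem_interior_integrableExpSet hx) m

lemma iteratedDeriv_nielsenBeta_pos {m : ℕ} (hm : Even m) {x : ℝ} (hx : 0 < x) :
    0 < iteratedDeriv m nielsenBeta x := by
  rw [iteratedDeriv_nielsenBeta hm hx]
  have h0 : 0 ≤ fun t : ℝ => t ^ m * exp (-x * t) := fun t =>
    mul_nonneg (hm.pow_nonneg t) (exp_pos _).le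
  refine lt_of_le_of_ne (integral_nonneg h0) fun h => nielsenMeasure_ne_zero ?_
  rw [eq_comm, integral_eq_zero_iff_of_nonneg h0 (integrable_pow_mul_exp m hx)] at h
  have hpos : ∀ᵐ t ∂nielsenMeasure, 0 < t :=
    (Measure.absolutelyContinuous_of_le nielsenMeasure_le).ae_le
      (ae_restrict_mem measurableSet_Ioi)
  rw [← ae_eq_bot, ← Filter.eventually_false_iff_eq_bot]
  filter_upwards [h, hpos] with t ht htp
  have : 0 < t ^ m * exp (-x * t) := by positivity
  exact this.ne' ht

lemma convexOn_log_iteratedDeriv_nielsenBeta {m : ℕ} (hm : Even m) :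
    ConvexOn ℝ (Ioi 0) fun x => log (iteratedDeriv m nielsenBeta x) := by
  refine ⟨convex_Ioi 0, fun x hx y hy a b ha hb hab => ?_⟩
  have hz : a • x + b • y ∈ Ioi (0 : ℝ) := convex_Ioi 0 hx hy ha hb hab
  have hfx := iteratedDeriv_nielsenBeta_pos hm hx
  have hfy := iteratedDeriv_nielsenBeta_pos hm hy
  have hfz := iteratedDeriv_nielsenBeta_pos hm hz
  simp only [smul_eq_mul] at *
  set A := iteratedDeriv m nielsenBeta x with hA
  set B := iteratedDeriv m nielsenBeta y with hB
  rw [log_le_iff_le_exp hfz, iteratedDeriv_nielsenBeta hm hz]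
  set E := exp (a * log A + b * log B) with hE
  -- Convexity of `exp` at `-x t - log A` and `-y t - log B`: after dividing by `A` and `B`,
  -- both integrals on the right-hand side are `1`.
  have key : ∀ t : ℝ, t ^ m * exp (-(a * x + b * y) * t) ≤
      E * (a / A * (t ^ m * exp (-x * t)) + b / B * (t ^ m * exp (-y * t))) := fun t => by
    have h := convexOn_exp.2 (mem_univ (-x * t - log A)) (mem_univ (-y * t - log B)) ha hb hab
    simp only [smul_eq_mul] at h
    rw [exp_sub, exp_sub, exp_log hfx, exp_log hfy] at h
    have h1 : exp (-(a * x + b * y) * t) =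
        E * exp (a * (-x * t - log A) + b * (-y * t - log B)) := by
      rw [hE, ← exp_add]; ring_nf
    have h2 : 0 ≤ t ^ m * E := mul_nonneg (hm.pow_nonneg t) (exp_pos _).le
    rw [h1]
    calc _ = t ^ m * E * exp (a * (-x * t - log A) + b * (-y * t - log B)) := by ring
      _ ≤ _ := mul_le_mul_of_nonneg_left h h2
      _ = _ := by ring
  have ix := (integrable_pow_mul_exp m hx).const_mul (a / A)
  have iy := (integrable_pow_mul_exp m hy).const_mul (b / B)
  refine (integral_mono (integrable_pow_mul_exp m hz) ((ix.add iy).const_mul E) key).trans_eq ?_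
  simp only [Pi.add_apply]
  rw [integral_const_mul, integral_add ix iy, integral_const_mul, integral_const_mul,
    ← iteratedDeriv_nielsenBeta hm hx, ← iteratedDeriv_nielsenBeta hm hy, ← hA, ← hB,
    div_mul_cancel₀ _ hfx.ne', div_mul_cancel₀ _ hfy.ne', hab, mul_one]

lemma ConvexOn.mul_sub_le_sub {g : ℝ → ℝ} (hg : ConvexOn ℝ (Ioi 0) g) {x y k : ℝ} (hx : 0 < x)
    (hxy : x ≤ y) (hk : 1 ≤ k) : k * (g y - g x) ≤ g (k * y) - g (k * x) := by
  rcases hxy.eq_or_lt with rfl | hlt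
  · simp
  have hy := hx.trans hlt
  have hkx : x ≤ k * x := le_mul_of_one_le_left hx.le hk
  have hky : y ≤ k * y := le_mul_of_one_le_left hy.le hk
  have hkl : k * x < k * y := by gcongr
  have hky0 : 0 < k * y := by positivity
  -- The two secants are compared through the one on `[x, k y]`.
  have h1 := hg.secant_mono (a := x) (x := y) (y := k * y) hx hy hky0 hlt.ne'
    (hlt.trans_le hky).ne' hky
  have h2 := hg.secant_mono (a := k * y) (x := x) (y := k * x) hky0 hx
    (hx.trans_le hkx) (hlt.trans_le hky).ne hkl.ne hkx
  have h3 : (g x - g (k * y)) / (x - k * y) = (g (k * y) - g x) / (k * y - x) := by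
    rw [← neg_div_neg_eq, neg_sub, neg_sub]
  rw [h3] at h2
  have h4 := h1.trans h2
  have h5 : (g (k * x) - g (k * y)) / (k * x - k * y) =
      (g (k * y) - g (k * x)) / k / (y - x) := by
    rw [← neg_div_neg_eq, neg_sub, neg_sub, ← mul_sub, div_div]
  rw [h5, div_le_div_iff_of_pos_right (sub_pos.2 hlt), le_div_iff₀ (by positivity)] at h4
  linarith

lemma nielsenBeta_ratio_rpow_le {m : ℕ} (hm : Even m) {x y k : ℝ} (hx : 0 < x) (hxy : x ≤ y)
    (hk : 1 ≤ k) :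
    (iteratedDeriv m nielsenBeta y / iteratedDeriv m nielsenBeta x) ^ k ≤
      iteratedDeriv m nielsenBeta (k * y) / iteratedDeriv m nielsenBeta (k * x) := by
  have hk0 : 0 < k := one_pos.trans_le hk
  have hy := hx.trans_le hxy
  have p1 := iteratedDeriv_nielsenBeta_pos hm hx
  have p2 := iteratedDeriv_nielsenBeta_pos hm hy
  have p3 := iteratedDeriv_nielsenBeta_pos hm (mul_pos hk0 hx)
  have p4 := iteratedDeriv_nielsenBeta_pos hm (mul_pos hk0 hy)
  rw [← log_le_log_iff (by positivity) (by positivity), log_rpow (by positivity),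
    log_div p2.ne' p1.ne', log_div p4.ne' p3.ne']
  exact (convexOn_log_iteratedDeriv_nielsenBeta hm).mul_sub_le_sub hx hxy hk

theorem iteratedDeriv_nielsenBeta_ratio_ineq (m : ℕ) (hm : Even m) (x y : ℝ)
    (hx : 0 < x) (hxy : x ≤ y) (k : ℝ) :
    (1 < k →
      (iteratedDeriv m nielsenBeta y / iteratedDeriv m nielsenBeta x) ^ k ≤
        iteratedDeriv m nielsenBeta (k * y) / iteratedDeriv m nielsenBeta (k * x)) ∧
    (0 < k → k ≤ 1 →
      iteratedDeriv m nielsenBeta (k * y) / iteratedDeriv m nielsenBeta (k * x) ≤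
        (iteratedDeriv m nielsenBeta y / iteratedDeriv m nielsenBeta x) ^ k) := by
  refine ⟨fun hk => nielsenBeta_ratio_rpow_le hm hx hxy hk.le, fun hk0 hk => ?_⟩
  have hkx := mul_pos hk0 hx
  have hky := mul_pos hk0 (hx.trans_le hxy)
  have h := nielsenBeta_ratio_rpow_le hm hkx (mul_le_mul_of_nonneg_left hxy hk0.le)
    ((one_le_inv₀ hk0).2 hk)
  rw [inv_mul_cancel_left₀ hk0.ne', inv_mul_cancel_left₀ hk0.ne'] at h
  have p := div_pos (iteratedDeriv_nielsenBeta_pos hm hky) (iteratedDeriv_nielsenBeta_pos hm hkx)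
  have h' := rpow_le_rpow (by positivity) h hk0.le
  rwa [← rpow_mul p.le, inv_mul_cancel₀ hk0.ne', rpow_one] at h'
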